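/- Under the interpolation setting, let the reweighted gradient descent iterates be θ^{t+1} = θ^t − η·Σ_{i=1}^M w_{i,t} ∇f_i(θ^t) with step size η = 1/(8L), where at each step t the weights satisfy w_{i,t} ≥ 0, Σ_{i=1}^M w_{i,t} = 1, and max_{i} w_{i,t} ≤ 2/M. Then for every T ≥ 1, the averaged iterate θ̄^T = (1/T)·Σ_{t=0}^{T−1} θ^t satisfies f(θ̄^T) − f(θ*) ≤ 8L‖θ^0 − θ*‖²/T + (1/T)·Σ_{t=0}^{T−1} δ^t, where δ^t = Σ_{i=1}^M (1/M − w_{i,t})·(f_i(θ^t) − f_i(θ*)). -/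

import Mathlib

open scoped InnerProductSpace BigOperators

/-!
Interpolation makes `θ⋆` a common minimizer of all the reweighted objectives
`F t = ∑ i, w t i * f i`, and each `F t` is again convex and `L`-smooth. So a reweighted step is an
ordinary gradient step on `F t`, which decreases the squared distance to `θ⋆` by at least
`η * (F t (θ t) - F t θ⋆)` as soon as `η * L ≤ 1 / 2`. Telescoping bounds the sum of the reweighted
gaps, the difference with the unweighted gaps is exactly `∑ t, δ t`, and Jensen's inequality passes
to the averaged iterate.
-/

theorem map_average_range_le_of_convexOn {V : Type*} [AddCommGroup V] [Module ℝ V] {φ : V → ℝ}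
    (hφ : ConvexOn ℝ Set.univ φ) {T : ℕ} (hT : 1 ≤ T) (x : ℕ → V) :
    φ ((1 / (T : ℝ)) • ∑ t ∈ Finset.range T, x t)
      ≤ (1 / (T : ℝ)) * ∑ t ∈ Finset.range T, φ (x t) := by
  rw [Finset.smul_sum, Finset.mul_sum]
  refine hφ.map_sum_le (fun _ _ ↦ by positivity) ?_ (fun _ _ ↦ Set.mem_univ _)
  rw [Finset.sum_const, Finset.card_range, nsmul_eq_mul, mul_one_div_cancel (by positivity)]

section InnerProductSpace

variable {E ι : Type*} [NormedAddCommGroup E] [InnerProductSpace ℝ E]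
  {f : E → ℝ} {g : E → E} {L η : ℝ} {z : E}

/-- `g x` is a subgradient of `f` at every `x`: the first-order form of convexity, with no
differentiability assumed, so that averages of convex functions need no gradient calculus. -/
def IsSubgradient (f : E → ℝ) (g : E → E) : Prop :=
  ∀ x y, f x + ⟪g x, y - x⟫_ℝ ≤ f y

/-- The quadratic upper model with slope `g x` and curvature `L` dominates `f` at every `x`. This
is the only consequence of `L`-smoothness that the convergence analysis needs, and it passes to
nonnegative combinations. -/
def HasQuadraticUpperBound (L : ℝ) (f : E → ℝ) (g : E → E) : Prop :=
  ∀ x y, f y ≤ f x + ⟪g x, y - x⟫_ℝ + L / 2 * ‖y - x‖ ^ 2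

theorem sum_mul_add_inner_sum_smul (s : Finset ι) (w a : ι → ℝ) (u : ι → E) (v : E) :
    ∑ i ∈ s, w i * a i + ⟪∑ i ∈ s, w i • u i, v⟫_ℝ = ∑ i ∈ s, w i * (a i + ⟪u i, v⟫_ℝ) := by
  simp only [sum_inner, real_inner_smul_left, mul_add, Finset.sum_add_distrib]

namespace IsSubgradient

theorem sum_smul {s : Finset ι} {w : ι → ℝ} {f : ι → E → ℝ} {g : ι → E → E}
    (hfg : ∀ i ∈ s, IsSubgradient (f i) (g i)) (hw : ∀ i ∈ s, 0 ≤ w i) :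
    IsSubgradient (fun x ↦ ∑ i ∈ s, w i * f i x) (fun x ↦ ∑ i ∈ s, w i • g i x) := by
  intro x y
  rw [sum_mul_add_inner_sum_smul]
  exact Finset.sum_le_sum fun i hi ↦ mul_le_mul_of_nonneg_left (hfg i hi x y) (hw i hi)

theorem convexOn (hfg : IsSubgradient f g) : ConvexOn ℝ Set.univ f := by
  refine ⟨convex_univ, fun x _ y _ a b ha hb hab ↦ ?_⟩
  set m := a • x + b • y with hm
  have balance : a * ⟪g m, x - m⟫_ℝ + b * ⟪g m, y - m⟫_ℝ = 0 := by
    have : a • (x - m) + b • (y - m) = 0 := by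
      rw [smul_sub, smul_sub, sub_add_sub_comm, ← hm, ← add_smul, hab, one_smul, sub_self]
    rw [← real_inner_smul_right, ← real_inner_smul_right, ← inner_add_right, this,
      inner_zero_right]
  calc f m = a * (f m + ⟪g m, x - m⟫_ℝ) + b * (f m + ⟪g m, y - m⟫_ℝ) := by
        linear_combination -balance - f m * hab
    _ ≤ a * f x + b * f y := by gcongr <;> exact hfg m _

theorem sub_le_inner (hfg : IsSubgradient f g) (x y : E) : f x - f y ≤ ⟪g x, x - y⟫_ℝ := by
  have := hfg x y
  rw [← neg_sub x y, inner_neg_right] at this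
  linarith

end IsSubgradient

namespace HasQuadraticUpperBound

theorem of_hasGradientAt [CompleteSpace E] (hf : ∀ x, HasGradientAt f (g x) x)
    (hg : ∀ x y, ‖g x - g y‖ ≤ L * ‖x - y‖) : HasQuadraticUpperBound L f g := by
  intro x y
  set v := y - x
  have along (r : ℝ) : HasDerivAt (fun r : ℝ ↦ f (x + r • v)) ⟪g (x + r • v), v⟫_ℝ r := by
    have line : HasDerivAt (fun r : ℝ ↦ x + r • v) v r := by
      simpa using ((hasDerivAt_id r).smul_const v).const_add x
    exact (hf (x + r • v)).hasFDerivAt.comp_hasDerivAt r line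
  have model (r : ℝ) : HasDerivAt (fun r : ℝ ↦ f x + r * ⟪g x, v⟫_ℝ + L / 2 * ‖v‖ ^ 2 * r ^ 2)
      (⟪g x, v⟫_ℝ + L * r * ‖v‖ ^ 2) r := by
    refine ((((hasDerivAt_id r).mul_const ⟪g x, v⟫_ℝ).const_add (f x)).add
      ((hasDerivAt_pow 2 r).const_mul (L / 2 * ‖v‖ ^ 2))).congr_deriv ?_
    push_cast
    ring
  have slope_le (r : ℝ) (hr : 0 ≤ r) :
      ⟪g (x + r • v), v⟫_ℝ ≤ ⟪g x, v⟫_ℝ + L * r * ‖v‖ ^ 2 := by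
    rw [← sub_le_iff_le_add', ← inner_sub_left]
    calc ⟪g (x + r • v) - g x, v⟫_ℝ ≤ ‖g (x + r • v) - g x‖ * ‖v‖ := real_inner_le_norm _ _
      _ ≤ L * ‖x + r • v - x‖ * ‖v‖ := by gcongr; exact hg _ _
      _ = L * r * ‖v‖ ^ 2 := by
        rw [add_sub_cancel_left, norm_smul, Real.norm_of_nonneg hr]; ring
  have at_one := image_le_of_deriv_right_le_deriv_boundary
    (fun r _ ↦ (along r).continuousAt.continuousWithinAt)
    (fun r _ ↦ (along r).hasDerivWithinAt) (by simp)
    (fun r _ ↦ (model r).continuousAt.continuousWithinAt)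
    (fun r _ ↦ (model r).hasDerivWithinAt) (fun r hr ↦ slope_le r hr.1)
    (Set.right_mem_Icc.2 (zero_le_one' ℝ))
  simpa [v] using at_one

theorem sum_smul {s : Finset ι} {w L : ι → ℝ} {f : ι → E → ℝ} {g : ι → E → E}
    (hfg : ∀ i ∈ s, HasQuadraticUpperBound (L i) (f i) (g i)) (hw : ∀ i ∈ s, 0 ≤ w i) :
    HasQuadraticUpperBound (∑ i ∈ s, w i * L i)
      (fun x ↦ ∑ i ∈ s, w i * f i x) (fun x ↦ ∑ i ∈ s, w i • g i x) := by
  intro x y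
  rw [sum_mul_add_inner_sum_smul, Finset.sum_div, Finset.sum_mul, ← Finset.sum_add_distrib]
  refine Finset.sum_le_sum fun i hi ↦ ?_
  linarith [mul_le_mul_of_nonneg_left (hfg i hi x y) (hw i hi)]

theorem apply_sub_smul_le (hfg : HasQuadraticUpperBound L f g) (hη : 0 ≤ η) (hηL : η * L ≤ 1)
    (x : E) : f (x - η • g x) ≤ f x - η / 2 * ‖g x‖ ^ 2 := by
  calc f (x - η • g x) ≤ f x - η * ‖g x‖ ^ 2 + L / 2 * (η * ‖g x‖) ^ 2 := by
        simpa [inner_smul_right, norm_smul, abs_of_nonneg hη, ← sub_eq_add_neg]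
          using hfg x (x - η • g x)
    _ = f x - η * ‖g x‖ ^ 2 + η / 2 * (η * L) * ‖g x‖ ^ 2 := by ring
    _ ≤ f x - η * ‖g x‖ ^ 2 + η / 2 * 1 * ‖g x‖ ^ 2 := by gcongr
    _ = f x - η / 2 * ‖g x‖ ^ 2 := by ring

-- A step of length `2 * η` satisfies the step-size condition too, and cannot go below `f z`.
theorem mul_norm_sq_le_sub (hfg : HasQuadraticUpperBound L f g) (hz : ∀ x, f z ≤ f x)
    (hη : 0 ≤ η) (hηL : η * L ≤ 1 / 2) (x : E) : η * ‖g x‖ ^ 2 ≤ f x - f z := by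
  have decrease := hfg.apply_sub_smul_le (η := 2 * η) (by linarith) (by linarith) x
  linarith [hz (x - (2 * η) • g x)]

end HasQuadraticUpperBound

theorem norm_gradientStep_sub_sq_le (hsub : IsSubgradient f g)
    (hquad : HasQuadraticUpperBound L f g) (hz : ∀ x, f z ≤ f x) (hη : 0 ≤ η)
    (hηL : η * L ≤ 1 / 2) (x : E) :
    ‖x - η • g x - z‖ ^ 2 ≤ ‖x - z‖ ^ 2 - η * (f x - f z) := by
  calc ‖x - η • g x - z‖ ^ 2
      = ‖x - z‖ ^ 2 - 2 * η * ⟪g x, x - z⟫_ℝ + η * (η * ‖g x‖ ^ 2) := by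
        rw [sub_right_comm, norm_sub_sq_real, inner_smul_right, norm_smul,
          Real.norm_of_nonneg hη, real_inner_comm]
        ring
    _ ≤ ‖x - z‖ ^ 2 - 2 * η * (f x - f z) + η * (f x - f z) := by
        gcongr
        · exact hsub.sub_le_inner x z
        · exact hquad.mul_norm_sq_le_sub hz hη hηL x
    _ = ‖x - z‖ ^ 2 - η * (f x - f z) := by ring

theorem sum_range_sub_le_of_gradientStep {F : ℕ → E → ℝ} {G : ℕ → E → E} {θ : ℕ → E}
    (hsub : ∀ t, IsSubgradient (F t) (G t)) (hquad : ∀ t, HasQuadraticUpperBound L (F t) (G t))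
    (hz : ∀ t x, F t z ≤ F t x) (hη : 0 < η) (hηL : η * L ≤ 1 / 2)
    (hθ : ∀ t, θ (t + 1) = θ t - η • G t (θ t)) (T : ℕ) :
    ∑ t ∈ Finset.range T, (F t (θ t) - F t z) ≤ ‖θ 0 - z‖ ^ 2 / η := by
  rw [le_div_iff₀' hη, Finset.mul_sum]
  calc ∑ t ∈ Finset.range T, η * (F t (θ t) - F t z)
      ≤ ∑ t ∈ Finset.range T, (‖θ t - z‖ ^ 2 - ‖θ (t + 1) - z‖ ^ 2) := by
        gcongr with t
        rw [hθ, le_sub_comm]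
        exact norm_gradientStep_sub_sq_le (hsub t) (hquad t) (hz t) hη.le hηL (θ t)
    _ = ‖θ 0 - z‖ ^ 2 - ‖θ T - z‖ ^ 2 := Finset.sum_range_sub' _ T
    _ ≤ ‖θ 0 - z‖ ^ 2 := sub_le_self _ (sq_nonneg _)

theorem sum_range_weighted_sub_le_of_gradientStep [Fintype ι] {f : ι → E → ℝ} {g : ι → E → E}
    (hsub : ∀ i, IsSubgradient (f i) (g i)) (hquad : ∀ i, HasQuadraticUpperBound L (f i) (g i))
    (hz : ∀ i x, f i z ≤ f i x) {w : ℕ → ι → ℝ} (hw0 : ∀ t i, 0 ≤ w t i)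
    (hw1 : ∀ t, ∑ i, w t i = 1) (hη : 0 < η) (hηL : η * L ≤ 1 / 2) {θ : ℕ → E}
    (hθ : ∀ t, θ (t + 1) = θ t - η • ∑ i, w t i • g i (θ t)) (T : ℕ) :
    ∑ t ∈ Finset.range T, ∑ i, w t i * (f i (θ t) - f i z) ≤ ‖θ 0 - z‖ ^ 2 / η := by
  simp only [mul_sub, Finset.sum_sub_distrib (s := Finset.univ)]
  refine sum_range_sub_le_of_gradientStep (F := fun t x ↦ ∑ i, w t i * f i x)
    (fun t ↦ .sum_smul (fun i _ ↦ hsub i) (fun i _ ↦ hw0 t i)) (fun t ↦ ?_)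
    (fun t x ↦ Finset.sum_le_sum fun i _ ↦ mul_le_mul_of_nonneg_left (hz i x) (hw0 t i))
    hη hηL hθ T
  simpa only [← Finset.sum_mul, hw1, one_mul] using
    HasQuadraticUpperBound.sum_smul (fun i (_ : i ∈ Finset.univ) ↦ hquad i) (fun i _ ↦ hw0 t i)

theorem stmt_2_general [Fintype ι] {f : ι → E → ℝ} {g : ι → E → E}
    (hsub : ∀ i, IsSubgradient (f i) (g i)) (hquad : ∀ i, HasQuadraticUpperBound L (f i) (g i))
    (hz : ∀ i x, f i z ≤ f i x) {p : ι → ℝ} (hp : ∀ i, 0 ≤ p i) {w : ℕ → ι → ℝ}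
    (hw0 : ∀ t i, 0 ≤ w t i) (hw1 : ∀ t, ∑ i, w t i = 1) (hη : 0 < η) (hηL : η * L ≤ 1 / 2)
    {θ : ℕ → E} (hθ : ∀ t, θ (t + 1) = θ t - η • ∑ i, w t i • g i (θ t)) {T : ℕ} (hT : 1 ≤ T) :
    ∑ i, p i * f i ((1 / (T : ℝ)) • ∑ t ∈ Finset.range T, θ t) - ∑ i, p i * f i z
      ≤ 1 / η * ‖θ 0 - z‖ ^ 2 / T
        + (1 / (T : ℝ)) * ∑ t ∈ Finset.range T, ∑ i, (p i - w t i) * (f i (θ t) - f i z) := by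
  have hT0 : (T : ℝ) ≠ 0 := by positivity
  have jensen := map_average_range_le_of_convexOn
    (IsSubgradient.sum_smul (fun i (_ : i ∈ Finset.univ) ↦ hsub i) (fun i _ ↦ hp i)).convexOn hT θ
  calc _ ≤ (1 / (T : ℝ)) * ∑ t ∈ Finset.range T, ∑ i, p i * f i (θ t) - ∑ i, p i * f i z := by
        gcongr
    _ = (1 / (T : ℝ)) * ∑ t ∈ Finset.range T, ∑ i, p i * (f i (θ t) - f i z) := by
        simp only [mul_sub, Finset.sum_sub_distrib, Finset.sum_const, Finset.card_range,
          nsmul_eq_mul]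
        field_simp
    _ = (1 / (T : ℝ)) * ∑ t ∈ Finset.range T, ∑ i, w t i * (f i (θ t) - f i z)
        + (1 / (T : ℝ)) * ∑ t ∈ Finset.range T, ∑ i, (p i - w t i) * (f i (θ t) - f i z) := by
        simp only [← mul_add, ← Finset.sum_add_distrib, ← add_mul, add_sub_cancel]
    _ ≤ (1 / (T : ℝ)) * (‖θ 0 - z‖ ^ 2 / η)
        + (1 / (T : ℝ)) * ∑ t ∈ Finset.range T, ∑ i, (p i - w t i) * (f i (θ t) - f i z) := by
        gcongr
        exact sum_range_weighted_sub_le_of_gradientStep hsub hquad hz hw0 hw1 hη hηL hθ T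
    _ = _ := by ring

end InnerProductSpace

/-- Reweighted full gradient descent with step size `η = 1/(8L)` under the
interpolation regime: convergence bound for the averaged iterate with the
reweighting excess term `δ^t`. -/
theorem stmt_2 {d M : ℕ} (hM : 0 < M) (L : ℝ) (hL : 0 < L)
    (f : Fin M → EuclideanSpace ℝ (Fin d) → ℝ)
    (hdiff : ∀ i, Differentiable ℝ (f i))
    (hconv : ∀ i, ∀ θ₁ θ₂ : EuclideanSpace ℝ (Fin d),
      f i θ₂ + ⟪gradient (f i) θ₂, θ₁ - θ₂⟫_ℝ ≤ f i θ₁)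
    (hsmooth : ∀ i, ∀ θ θ' : EuclideanSpace ℝ (Fin d),
      ‖gradient (f i) θ - gradient (f i) θ'‖ ≤ L * ‖θ - θ'‖)
    (θstar : EuclideanSpace ℝ (Fin d))
    (hinterp : ∀ i θ, f i θstar ≤ f i θ)
    (w : ℕ → Fin M → ℝ)
    (hw0 : ∀ t i, 0 ≤ w t i)
    (hw1 : ∀ t, ∑ i, w t i = 1)
    (hwmax : ∀ t i, w t i ≤ 2 / (M : ℝ))
    (η : ℝ) (hη : η = 1 / (8 * L))
    (θ : ℕ → EuclideanSpace ℝ (Fin d))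
    (hupd : ∀ t, θ (t + 1) = θ t - η • ∑ i, w t i • gradient (f i) (θ t))
    (T : ℕ) (hT : 1 ≤ T) :
    (1 / (M : ℝ)) * ∑ i, f i ((1 / (T : ℝ)) • ∑ t ∈ Finset.range T, θ t)
        - (1 / (M : ℝ)) * ∑ i, f i θstar
      ≤ 8 * L * ‖θ 0 - θstar‖ ^ 2 / (T : ℝ)
        + (1 / (T : ℝ)) * ∑ t ∈ Finset.range T,
            ∑ i, ((1 / (M : ℝ)) - w t i) * (f i (θ t) - f i θstar) := by
  have hηL : η * L = 1 / 8 := by rw [hη]; field_simp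
  have hquad i : HasQuadraticUpperBound L (f i) (gradient (f i)) :=
    .of_hasGradientAt (fun x ↦ (hdiff i x).hasGradientAt) (hsmooth i)
  have bound := stmt_2_general (p := fun _ ↦ 1 / (M : ℝ)) (fun i x y ↦ hconv i y x) hquad hinterp
    (fun _ ↦ by positivity) hw0 hw1 (by rw [hη]; positivity) (by linarith) hupd hT
  simpa only [← Finset.mul_sum, hη, one_div_one_div] using bound
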